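/- There exists x ∈ [0, π] such that 2·sin(x) + sin(2x) + (4/3)·sin(3x) + sin(4x) + (6/5)·sin(5x) + (3/4)·sin(8x) < 0. -/

import Mathlib

open Real

/-!
Since `sin ((k + 1) * x) = U_k (cos x) * sin x` for the Chebyshev polynomials `U_k` of the second
kind, a sine polynomial has on `(0, π)` the sign of the algebraic polynomial `∑ a_k U_k` at
`t = cos x`. For the coefficients at hand this polynomial is negative at the rational point
`t = -3 / 5`.
-/

open Polynomial.Chebyshev (U)

/-- The sine polynomial with coefficients `a`. Coefficients are indexed from zero, so that `a k`
belongs to the frequency `k + 1`. -/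
noncomputable def sinePolynomial {n : ℕ} (a : Fin n → ℝ) (x : ℝ) : ℝ :=
  ∑ k, a k * sin ((k + 1) * x)

/-- The algebraic polynomial in `cos x` that remains after dividing the sine polynomial with
coefficients `a` by `sin x`. -/
noncomputable def chebyshevUSum {n : ℕ} (a : Fin n → ℝ) : Polynomial ℝ :=
  ∑ k, a k • U ℝ k

section

variable {n : ℕ} (a : Fin n → ℝ)

theorem sinePolynomial_eq_eval_mul_sin (x : ℝ) :
    sinePolynomial a x = (chebyshevUSum a).eval (cos x) * sin x := by
  simp only [sinePolynomial, chebyshevUSum, Polynomial.eval_finsetSum, Polynomial.eval_smul,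
    smul_eq_mul, Finset.sum_mul, mul_assoc, Polynomial.Chebyshev.U_real_cos, Int.cast_natCast]

theorem sinePolynomial_arccos_neg_iff {t : ℝ} (ht : t ∈ Set.Ioo (-1) 1) :
    sinePolynomial a (arccos t) < 0 ↔ (chebyshevUSum a).eval t < 0 := by
  have sin_pos : 0 < sin (arccos t) :=
    sin_pos_of_pos_of_lt_pi (arccos_pos.mpr ht.2) (arccos_lt_pi.mpr ht.1)
  rw [sinePolynomial_eq_eval_mul_sin, cos_arccos ht.1.le ht.2.le]
  exact ⟨fun h ↦ neg_of_mul_neg_left h sin_pos.le, fun h ↦ mul_neg_of_neg_of_pos h sin_pos⟩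

end

theorem eval_chebyshevU_eq {R : Type*} [CommRing R] (k : ℤ) (t : R) :
    (U R k).eval t = 2 * t * (U R (k - 1)).eval t - (U R (k - 2)).eval t := by
  rw [Polynomial.Chebyshev.U_eq]
  simp

/-- The coefficients of the counterexample. They satisfy Belov's alternating-sum condition with
equality: `∑ k, (-1) ^ k * (k + 1) * a k = 2 - 2 + 4 - 4 + 6 - 6 = 0`. -/
noncomputable def counterexampleCoeff : Fin 8 → ℝ :=
  ![2, 1, 4 / 3, 1, 6 / 5, 0, 0, 3 / 4]

theorem sinePolynomial_counterexampleCoeff (x : ℝ) :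
    sinePolynomial counterexampleCoeff x =
      2 * sin x + sin (2 * x) + (4 / 3) * sin (3 * x) + sin (4 * x) + (6 / 5) * sin (5 * x)
        + (3 / 4) * sin (8 * x) := by
  simp only [sinePolynomial, counterexampleCoeff, Fin.sum_univ_eight, Matrix.cons_val]
  norm_num

theorem eval_chebyshevUSum_counterexampleCoeff (t : ℝ) :
    (chebyshevUSum counterexampleCoeff).eval t =
      96 * t ^ 7 - 144 * t ^ 5 + 96 / 5 * t ^ 4 + 68 * t ^ 3 - 136 / 15 * t ^ 2 - 8 * t
        + 28 / 15 := by
  have U_one : (U ℝ 1).eval t = 2 * t := by simp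
  have U_two : (U ℝ 2).eval t = 4 * t ^ 2 - 1 := by simp [Polynomial.Chebyshev.U_two]
  have U_three : (U ℝ 3).eval t = 8 * t ^ 3 - 4 * t := by
    simp only [eval_chebyshevU_eq 3, Int.reduceSub, U_two, U_one]
    ring
  have U_four : (U ℝ 4).eval t = 16 * t ^ 4 - 12 * t ^ 2 + 1 := by
    simp only [eval_chebyshevU_eq 4, Int.reduceSub, U_three, U_two]
    ring
  have U_five : (U ℝ 5).eval t = 32 * t ^ 5 - 32 * t ^ 3 + 6 * t := by
    simp only [eval_chebyshevU_eq 5, Int.reduceSub, U_four, U_three]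
    ring
  have U_six : (U ℝ 6).eval t = 64 * t ^ 6 - 80 * t ^ 4 + 24 * t ^ 2 - 1 := by
    simp only [eval_chebyshevU_eq 6, Int.reduceSub, U_five, U_four]
    ring
  have U_seven : (U ℝ 7).eval t = 128 * t ^ 7 - 192 * t ^ 5 + 80 * t ^ 3 - 8 * t := by
    simp only [eval_chebyshevU_eq 7, Int.reduceSub, U_six, U_five]
    ring
  have sum_eq : (chebyshevUSum counterexampleCoeff).eval t =
      2 + (U ℝ 1).eval t + 4 / 3 * (U ℝ 2).eval t + (U ℝ 3).eval t + 6 / 5 * (U ℝ 4).eval t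
        + 3 / 4 * (U ℝ 7).eval t := by
    simp [chebyshevUSum, counterexampleCoeff, Fin.sum_univ_eight]
  rw [sum_eq, U_one, U_two, U_three, U_four, U_seven]
  ring

theorem belov_not_sufficient :
    ∃ x ∈ Set.Icc 0 Real.pi,
      2 * Real.sin x + Real.sin (2 * x) + (4 / 3) * Real.sin (3 * x)
        + Real.sin (4 * x) + (6 / 5) * Real.sin (5 * x)
        + (3 / 4) * Real.sin (8 * x) < 0 := by
  refine ⟨arccos (-3 / 5), ⟨arccos_nonneg _, arccos_le_pi _⟩, ?_⟩
  rw [← sinePolynomial_counterexampleCoeff, sinePolynomial_arccos_neg_iff _ (by norm_num),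
    eval_chebyshevUSum_counterexampleCoeff]
  norm_num
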